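/- Let P be a finite super logic program. Let P^n_not be the set of formulas of the form not E1 ∧ … ∧ not Em → not E0 contained in P^n, and define D_0 = Def and D_{n+1} = Λ_P(D_n). Then for every reduced interpretation I = I_obj ∪ I_def with I ⊨ P and every natural number n: I_def ⊨ P^n_not if and only if I_def ∈ D_n. -/

import Mathlib

/-!
Only the truth values of the formulas `notConj E` matter, so a full interpretation `J` is replaced
by its reduct `red J`; conversely, every `Id ∈ DefSet At` is the reduct of some `ofReduced Io Id`.

Up to propositional consequence, `P^{n+1}` adds to `P` only formulas about default atoms. Hence the
models of `P^n` are the models of `P` whose default part satisfies `P^n_not` (`satTheory_PSeq`),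
and making the objective part smaller does not affect the second condition. So the minimal models
of `P^n` are the minimal models of `P` with default part satisfying `P^n_not`. By induction on `n`,
a default part of a model of `P` satisfies `P^n_not` iff it belongs to `D_n`, and thus the
objective parts of the minimal models of `P^n` form `Φ_P(D_n)` (`minEntails_PSeq`).

It remains to see that, for a set `O` of objective valuations, `Id` satisfies every implication
`not E1 ∧ … ∧ not Em → not E0` whose objective counterpart holds throughout `O` if and only if `Id`
is given by a nonempty subset of `O` (`closed_iff_givenBy`). The subset consists of those
`Io ∈ O` that falsify every `E` with `Id E`; as there are finitely many valuations, finitely many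
such `E` are enough to exclude all the other members of `O`, so they form the premise of an
implication. The case `E0 = true` yields nonemptiness.
-/

/-- Formulas of the modal language `L_not` over the set `At` of objective atoms.
`not F` is the default negation atom for a formula `F` (arbitrary nesting allowed). -/
inductive Fml (At : Type) : Type
  | atom : At → Fml At
  | tru : Fml At
  | fls : Fml At
  | neg : Fml At → Fml At
  | conj : Fml At → Fml At → Fml At
  | disj : Fml At → Fml At → Fml At
  | impl : Fml At → Fml At → Fml At
  | equiv : Fml At → Fml At → Fml At
  | not : Fml At → Fml At

/-- An interpretation of `L_not`: a truth value for every objective atom and for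
every default atom `not F` (the latter treated as new propositional atoms). -/
structure Interp (At : Type) where
  obj : At → Prop
  dflt : Fml At → Prop

/-- Classical satisfaction of a formula by an interpretation. -/
def Interp.sat {At : Type} (I : Interp At) : Fml At → Prop
  | Fml.atom a => I.obj a
  | Fml.tru => True
  | Fml.fls => False
  | Fml.neg F => ¬ Interp.sat I F
  | Fml.conj F G => Interp.sat I F ∧ Interp.sat I G
  | Fml.disj F G => Interp.sat I F ∨ Interp.sat I G
  | Fml.impl F G => Interp.sat I F → Interp.sat I G
  | Fml.equiv F G => (Interp.sat I F ↔ Interp.sat I G)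
  | Fml.not F => I.dflt F

/-- `I` is a model of the theory `T`. -/
def Interp.satTheory {At : Type} (I : Interp At) (T : Set (Fml At)) : Prop :=
  ∀ F ∈ T, I.sat F

/-- A set `S` contains `T`, the axioms (CA) and (DA), and is closed under
classical propositional consequence and the invariance rule (IR). -/
def CnClosed {At : Type} (T S : Set (Fml At)) : Prop :=
  T ⊆ S ∧
  Fml.not Fml.fls ∈ S ∧
  Fml.neg (Fml.not Fml.tru) ∈ S ∧
  (∀ F G : Fml At,
    Fml.equiv (Fml.not (Fml.disj F G)) (Fml.conj (Fml.not F) (Fml.not G)) ∈ S) ∧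
  (∀ F : Fml At, (∀ I : Interp At, I.satTheory S → I.sat F) → F ∈ S) ∧
  (∀ F G : Fml At, Fml.equiv F G ∈ S → Fml.equiv (Fml.not F) (Fml.not G) ∈ S)

/-- `Cn_not(T)`: the smallest set of formulas containing `T`, the axioms (CA), (DA),
closed under propositional consequence and the invariance rule (IR). -/
def CnNot {At : Type} (T : Set (Fml At)) : Set (Fml At) :=
  ⋂₀ {S | CnClosed T S}

/-- `M` is smaller than `N`: they agree on all default atoms and the objective atoms
true in `M` form a proper subset of those true in `N`. -/
def Smaller {At : Type} (M N : Interp At) : Prop :=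
  M.dflt = N.dflt ∧ {a | M.obj a} ⊂ {a | N.obj a}

/-- `M` is a minimal model of `T`. -/
def IsMinModel {At : Type} (T : Set (Fml At)) (M : Interp At) : Prop :=
  M.satTheory T ∧ ∀ N : Interp At, N.satTheory T → ¬ Smaller N M

/-- `T ⊨_min F`: `F` is true in all minimal models of `T`. -/
def MinEntails {At : Type} (T : Set (Fml At)) (F : Fml At) : Prop :=
  ∀ M : Interp At, IsMinModel T M → M.sat F

/-- `Td` is a static expansion of `T`. -/
def IsStaticExpansion {At : Type} (T Td : Set (Fml At)) : Prop :=
  Td = CnNot (T ∪ {G | ∃ F : Fml At, MinEntails Td (Fml.neg F) ∧ G = Fml.not F})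

/-- `Tbar` is the least static expansion of `T`. -/
def IsLeastStaticExpansion {At : Type} (T Tbar : Set (Fml At)) : Prop :=
  IsStaticExpansion T Tbar ∧ ∀ Td : Set (Fml At), IsStaticExpansion T Td → Tbar ⊆ Td

/-- A clause of a super logic program:
`A1 ∨ … ∨ Ak ← B1 ∧ … ∧ Bm ∧ not C1 ∧ … ∧ not Cn`, where the `Ai` (head) and
`Bi` (posBody) are objective atoms and the `Ci` (negBody) are finite
conjunctions of objective atoms. -/
structure Clause (At : Type) where
  head : List At
  posBody : List At
  negBody : List (List At)

/-- Valuations of the objective atoms (`Obj`). -/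
abbrev ObjVal (At : Type) := At → Prop

/-- Valuations of the default atoms `not(p1 ∧ … ∧ pn)`, indexed by the list
`[p1, …, pn]` of atoms of the conjunction. -/
abbrev DefVal (At : Type) := List At → Prop

/-- `Def`: the valuations of the default atoms making `not(true)`
(the empty conjunction case) false. -/
def DefSet (At : Type) : Set (DefVal At) := {d | ¬ d []}

/-- Satisfaction of a clause by a reduced interpretation `I_obj ∪ I_def`. -/
def satClause {At : Type} (Io : ObjVal At) (Id : DefVal At) (c : Clause At) : Prop :=
  ((∀ b ∈ c.posBody, Io b) ∧ (∀ C ∈ c.negBody, Id C)) → ∃ a ∈ c.head, Io a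

/-- `I_obj ∪ I_def` is a model of the super program `P`. -/
def satProg {At : Type} (Io : ObjVal At) (Id : DefVal At) (P : Set (Clause At)) : Prop :=
  ∀ c ∈ P, satClause Io Id c

/-- `I_obj ∪ I_def` is a minimal model of `P`: it is a model and no model with the
same default part has a strictly smaller set of true objective atoms. -/
def IsMinModelProg {At : Type} (P : Set (Clause At)) (Io : ObjVal At) (Id : DefVal At) : Prop :=
  satProg Io Id P ∧
  ∀ Io' : ObjVal At, satProg Io' Id P → ¬ ({a | Io' a} ⊂ {a | Io a})

/-- `I_def` is given by the set `O` of objective valuations: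
`I_def ⊨ not(p1∧…∧pn)` iff every valuation in `O` satisfies `¬(p1∧…∧pn)`. -/
def givenBy {At : Type} (Id : DefVal At) (O : Set (ObjVal At)) : Prop :=
  ∀ E : List At, Id E ↔ ∀ Io ∈ O, ∃ p ∈ E, ¬ Io p

/-- The operator `Φ_P`: objective parts of minimal models of `P` whose default part
belongs to `D`. -/
def PhiOp {At : Type} (P : Set (Clause At)) (D : Set (DefVal At)) : Set (ObjVal At) :=
  {Io | ∃ Id ∈ D, IsMinModelProg P Io Id}

/-- The operator `Ψ_P`: default valuations given by some nonempty subset of `O`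
and extendable to a model of `P`. -/
def PsiOp {At : Type} (P : Set (Clause At)) (O : Set (ObjVal At)) : Set (DefVal At) :=
  {Id | Id ∈ DefSet At ∧
        (∃ O' ⊆ O, O'.Nonempty ∧ givenBy Id O') ∧
        (∃ Io : ObjVal At, satProg Io Id P)}

/-- The operator `Λ_P := Ψ_P ∘ Φ_P`. -/
def LamOp {At : Type} (P : Set (Clause At)) : Set (DefVal At) → Set (DefVal At) :=
  PsiOp P ∘ PhiOp P

/-- The conjunction `p1 ∧ … ∧ pn` of a list of objective atoms
(the empty conjunction is `true`, a one-element list is just the atom). -/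
def conjAtoms {At : Type} : List At → Fml At
  | [] => Fml.tru
  | [p] => Fml.atom p
  | p :: q :: ps => Fml.conj (Fml.atom p) (conjAtoms (q :: ps))

/-- Conjunction of a list of formulas. -/
def conjList {At : Type} : List (Fml At) → Fml At
  | [] => Fml.tru
  | [F] => F
  | F :: G :: Gs => Fml.conj F (conjList (G :: Gs))

/-- Disjunction `p1 ∨ … ∨ pk` of a list of objective atoms (empty = `false`). -/
def disjAtoms {At : Type} : List At → Fml At
  | [] => Fml.fls
  | [p] => Fml.atom p
  | p :: q :: ps => Fml.disj (Fml.atom p) (disjAtoms (q :: ps))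

/-- The default atom `not(p1 ∧ … ∧ pn)`, with `not(true)` (the case `n = 0`)
identified with `false`. -/
def notConj {At : Type} : List At → Fml At
  | [] => Fml.fls
  | p :: ps => Fml.not (conjAtoms (p :: ps))

/-- The formula of `L_not` corresponding to a program clause. -/
def Clause.toFml {At : Type} (c : Clause At) : Fml At :=
  Fml.impl (conjList (c.posBody.map Fml.atom ++ c.negBody.map notConj))
    (disjAtoms c.head)

/-- The default part of the reduct of a full interpretation `I`:
its restriction to the default atoms `not(p1 ∧ … ∧ pn)`. -/
def reductDef {At : Type} (I : Interp At) : DefVal At :=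
  fun E => I.dflt (conjAtoms E)

/-- `L*_not`: propositional formulas over the objective atoms and the default atoms
`not(p1 ∧ … ∧ pn)` with `n ≥ 1` (the atom `not(true)`, i.e. the case `n = 0`,
is identified with the constant `false`, which is available as `Fml.fls`). -/
inductive LStar {At : Type} : Fml At → Prop
  | atom (a : At) : LStar (Fml.atom a)
  | tru : LStar Fml.tru
  | fls : LStar Fml.fls
  | dflt (p : At) (ps : List At) : LStar (Fml.not (conjAtoms (p :: ps)))
  | neg {F : Fml At} : LStar F → LStar (Fml.neg F)
  | conj {F G : Fml At} : LStar F → LStar G → LStar (Fml.conj F G)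
  | disj {F G : Fml At} : LStar F → LStar G → LStar (Fml.disj F G)
  | impl {F G : Fml At} : LStar F → LStar G → LStar (Fml.impl F G)
  | equiv {F G : Fml At} : LStar F → LStar G → LStar (Fml.equiv F G)

/-- Classical propositional consequence within `L*_not`
(default atoms treated as new propositional atoms). -/
def CnStar {At : Type} (S : Set (Fml At)) : Set (Fml At) :=
  {F | LStar F ∧ ∀ I : Interp At, I.satTheory S → I.sat F}

/-- One step of the fixed point construction:
`Cn(P ∪ {not E1 ∧ … ∧ not Em → not E0 : S ⊨_min ¬E1 ∧ … ∧ ¬Em → ¬E0})`,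
where the `Ei` range over conjunctions of objective atoms, `E0` may be the empty
conjunction `true`, and `not(true)` is identified with `false`. -/
def PStep {At : Type} (P0 S : Set (Fml At)) : Set (Fml At) :=
  CnStar (P0 ∪
    {F | ∃ (Es : List (List At)) (E0 : List At),
      F = Fml.impl (conjList (Es.map notConj)) (notConj E0) ∧
      MinEntails S
        (Fml.impl (conjList (Es.map (fun E => Fml.neg (conjAtoms E))))
          (Fml.neg (conjAtoms E0)))})

/-- The sequence `P^0 = P`, `P^{n+1} = PStep P (P^n)`. -/
def PSeq {At : Type} (P : Set (Clause At)) : ℕ → Set (Fml At)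
  | 0 => Clause.toFml '' P
  | n + 1 => PStep (Clause.toFml '' P) (PSeq P n)

/-- The implication `not E1 ∧ … ∧ not Em → not E0`. -/
def notImpl {At : Type} (Es : List (List At)) (E0 : List At) : Fml At :=
  Fml.impl (conjList (Es.map notConj)) (notConj E0)

/-- The default part of `J`, with `not(true)` forced to be false. This differs from `reductDef J`
only on the empty list, where `J.dflt Fml.tru` is unconstrained. -/
def red {At : Type} (J : Interp At) : DefVal At := fun E => J.sat (notConj E)

/-- A full interpretation extending the reduced one `Io ∪ Id`. Default atoms which are not of the
form `not(p1 ∧ … ∧ pn)` are made false. -/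
def ofReduced {At : Type} (Io : ObjVal At) (Id : DefVal At) : Interp At where
  obj := Io
  dflt := fun F => ∃ E, conjAtoms E = F ∧ Id E

/-- `Id` satisfies `P^n_not`. -/
def SatNot {At : Type} (P : Set (Clause At)) (n : ℕ) (Id : DefVal At) : Prop :=
  ∀ (Es : List (List At)) (E0 : List At), notImpl Es E0 ∈ PSeq P n → (∀ E ∈ Es, Id E) → Id E0

theorem conjAtoms_injective {At : Type} : ∀ {E E' : List At}, conjAtoms E = conjAtoms E' → E = E'
  | [], [], _ => rfl
  | [], [_], h => by simp [conjAtoms] at h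
  | [], _ :: _ :: _, h => by simp [conjAtoms] at h
  | [_], [], h => by simp [conjAtoms] at h
  | [_], [_], h => by simpa [conjAtoms] using h
  | [_], _ :: _ :: _, h => by simp [conjAtoms] at h
  | _ :: _ :: _, [], h => by simp [conjAtoms] at h
  | _ :: _ :: _, [_], h => by simp [conjAtoms] at h
  | _ :: _ :: _, _ :: _ :: _, h => by
    simp only [conjAtoms, Fml.conj.injEq, Fml.atom.injEq] at h
    rw [h.1, conjAtoms_injective h.2]

theorem sat_conjAtoms {At : Type} (J : Interp At) :
    ∀ E : List At, J.sat (conjAtoms E) ↔ ∀ p ∈ E, J.obj p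
  | [] => by simp [conjAtoms, Interp.sat]
  | [p] => by simp [conjAtoms, Interp.sat]
  | p :: q :: ps => by
    rw [conjAtoms, Interp.sat, sat_conjAtoms J (q :: ps), List.forall_mem_cons (a := p)]
    rfl

theorem sat_conjList {At : Type} (J : Interp At) :
    ∀ l : List (Fml At), J.sat (conjList l) ↔ ∀ F ∈ l, J.sat F
  | [] => by simp [conjList, Interp.sat]
  | [F] => by simp [conjList]
  | F :: G :: Gs => by
    rw [conjList, Interp.sat, sat_conjList J (G :: Gs), List.forall_mem_cons (a := F)]

theorem sat_disjAtoms {At : Type} (J : Interp At) :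
    ∀ E : List At, J.sat (disjAtoms E) ↔ ∃ p ∈ E, J.obj p
  | [] => by simp [disjAtoms, Interp.sat]
  | [p] => by simp [disjAtoms, Interp.sat]
  | p :: q :: ps => by
    rw [disjAtoms, Interp.sat, sat_disjAtoms J (q :: ps), List.exists_mem_cons_iff (a := p)]
    rfl

theorem sat_notImpl {At : Type} (J : Interp At) (Es : List (List At)) (E0 : List At) :
    J.sat (notImpl Es E0) ↔ ((∀ E ∈ Es, red J E) → red J E0) := by
  simp [notImpl, Interp.sat, sat_conjList, red]

theorem sat_toFml {At : Type} (J : Interp At) (c : Clause At) :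
    J.sat c.toFml ↔ satClause J.obj (red J) c := by
  simp only [Clause.toFml, Interp.sat, sat_conjList, sat_disjAtoms, satClause, red,
    List.forall_mem_append, List.forall_mem_map]

theorem satTheory_toFml {At : Type} (J : Interp At) (P : Set (Clause At)) :
    J.satTheory (Clause.toFml '' P) ↔ satProg J.obj (red J) P := by
  simp [Interp.satTheory, satProg, sat_toFml]

theorem red_mem_DefSet {At : Type} (J : Interp At) : red J ∈ DefSet At := id

theorem red_congr {At : Type} {J K : Interp At} (h : J.dflt = K.dflt) : red J = red K := by
  funext E
  cases E with
  | nil => rfl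
  | cons p ps => simp [red, notConj, Interp.sat, h]

theorem red_ofReduced {At : Type} (Io : ObjVal At) {Id : DefVal At} (hId : Id ∈ DefSet At) :
    red (ofReduced Io Id) = Id := by
  funext E
  cases E with
  | nil => exact propext ⟨False.elim, hId⟩
  | cons p ps =>
    refine propext ⟨?_, fun h => ⟨_, rfl, h⟩⟩
    rintro ⟨E, hE, h⟩
    rwa [← conjAtoms_injective hE]

theorem LStar.conjList {At : Type} : ∀ {l : List (Fml At)}, (∀ F ∈ l, LStar F) → LStar (conjList l)
  | [], _ => .tru
  | [F], h => h F (by simp)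
  | F :: _ :: _, h => .conj (h F (by simp)) (LStar.conjList fun K hK => h K (by simp [hK]))

theorem LStar.disjAtoms {At : Type} : ∀ l : List At, LStar (disjAtoms l)
  | [] => .fls
  | [p] => .atom p
  | p :: q :: ps => .disj (.atom p) (LStar.disjAtoms (q :: ps))

theorem LStar.notConj {At : Type} : ∀ E : List At, LStar (notConj E)
  | [] => .fls
  | p :: ps => .dflt p ps

theorem LStar.notImpl {At : Type} (Es : List (List At)) (E0 : List At) : LStar (notImpl Es E0) :=
  .impl (.conjList (List.forall_mem_map.2 fun E _ => .notConj E)) (.notConj E0)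

theorem LStar.toFml {At : Type} (c : Clause At) : LStar c.toFml :=
  .impl (.conjList (List.forall_mem_append.2
    ⟨List.forall_mem_map.2 fun b _ => .atom b, List.forall_mem_map.2 fun E _ => .notConj E⟩))
    (.disjAtoms _)

/-- The implication `¬E1 ∧ … ∧ ¬Em → ¬E0` holds in all minimal models of `S`. -/
def MinImpl {At : Type} (S : Set (Fml At)) (Es : List (List At)) (E0 : List At) : Prop :=
  MinEntails S (Fml.impl (conjList (Es.map (fun E => Fml.neg (conjAtoms E))))
    (Fml.neg (conjAtoms E0)))

theorem toFml_mem_PSeq {At : Type} {P : Set (Clause At)} {c : Clause At} (hc : c ∈ P) :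
    ∀ n, c.toFml ∈ PSeq P n
  | 0 => ⟨c, hc, rfl⟩
  | _ + 1 => ⟨.toFml c, fun _ hI => hI _ (Or.inl ⟨c, hc, rfl⟩)⟩

theorem notImpl_mem_PSeq_succ {At : Type} {P : Set (Clause At)} {n : ℕ} {Es : List (List At)}
    {E0 : List At}
    (h : MinImpl (PSeq P n) Es E0) : notImpl Es E0 ∈ PSeq P (n + 1) :=
  ⟨.notImpl Es E0, fun _ hI => hI _ (Or.inr ⟨Es, E0, rfl, h⟩)⟩

/-- A model of `P` is a model of `P^{n+1}` as soon as it satisfies the implications generating the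
step, since passing to consequences imposes no further condition. -/
theorem satTheory_PSeq_succ {At : Type} {P : Set (Clause At)} {n : ℕ} {J : Interp At}
    (hP : satProg J.obj (red J) P)
    (h : ∀ Es E0, MinImpl (PSeq P n) Es E0 → (∀ E ∈ Es, red J E) → red J E0) :
    J.satTheory (PSeq P (n + 1)) := by
  rintro F ⟨-, hF⟩
  refine hF J ?_
  rintro G (hG | ⟨Es, E0, rfl, hE⟩)
  · exact (satTheory_toFml J P).2 hP G hG
  · exact (sat_notImpl J Es E0).2 (h Es E0 hE)

theorem satTheory_PSeq {At : Type} (P : Set (Clause At)) (n : ℕ) (J : Interp At) :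
    J.satTheory (PSeq P n) ↔ satProg J.obj (red J) P ∧ SatNot P n (red J) := by
  constructor
  · intro h
    exact ⟨fun c hc => (sat_toFml J c).1 (h _ (toFml_mem_PSeq hc n)),
      fun Es E0 hE => (sat_notImpl J Es E0).1 (h _ hE)⟩
  · rintro ⟨hP, hN⟩
    cases n with
    | zero => exact (satTheory_toFml J P).2 hP
    | succ n => exact satTheory_PSeq_succ hP fun Es E0 hE => hN Es E0 (notImpl_mem_PSeq_succ hE)

theorem isMinModel_PSeq {At : Type} (P : Set (Clause At)) (n : ℕ) (J : Interp At) :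
    IsMinModel (PSeq P n) J ↔ IsMinModelProg P J.obj (red J) ∧ SatNot P n (red J) := by
  simp only [IsMinModel, IsMinModelProg, satTheory_PSeq]
  constructor
  · rintro ⟨⟨hP, hN⟩, hmin⟩
    refine ⟨⟨hP, fun Io' hIo' hlt => ?_⟩, hN⟩
    have hred : red (⟨Io', J.dflt⟩ : Interp At) = red J := red_congr rfl
    exact hmin ⟨Io', J.dflt⟩ (by rw [hred]; exact ⟨hIo', hN⟩) ⟨rfl, hlt⟩
  · rintro ⟨⟨hP, hmin⟩, hN⟩
    refine ⟨⟨hP, hN⟩, fun N hNP hlt => hmin N.obj ?_ hlt.2⟩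
    rw [← red_congr hlt.1]
    exact hNP.1

theorem iter_subset_DefSet {At : Type} (P : Set (Clause At)) :
    ∀ n, (LamOp P)^[n] (DefSet At) ⊆ DefSet At
  | 0 => subset_rfl
  | n + 1 => by
    rw [Function.iterate_succ_apply']
    exact fun _ h => h.1

/-- The implication `¬E1 ∧ … ∧ ¬Em → ¬E0` holds throughout `O`. -/
def HoldsOn {At : Type} (O : Set (ObjVal At)) (Es : List (List At)) (E0 : List At) : Prop :=
  ∀ Io ∈ O, (∀ E ∈ Es, ∃ p ∈ E, ¬ Io p) → ∃ p ∈ E0, ¬ Io p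

/-- If the default parts of models of `P` satisfying `P^n_not` are those in `D`, then the
minimal models of `P^n` have exactly the objective parts `Φ_P(D)`. -/
theorem minEntails_PSeq {At : Type} {P : Set (Clause At)} {n : ℕ} {D : Set (DefVal At)}
    (hD : D ⊆ DefSet At)
    (ih : ∀ (Io : ObjVal At), ∀ Id ∈ DefSet At, satProg Io Id P → (SatNot P n Id ↔ Id ∈ D))
    (Es : List (List At)) (E0 : List At) :
    MinImpl (PSeq P n) Es E0 ↔ HoldsOn (PhiOp P D) Es E0 := by
  have key : ∀ J : Interp At, J.sat (Fml.impl
      (conjList (Es.map (fun E => Fml.neg (conjAtoms E)))) (Fml.neg (conjAtoms E0))) ↔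
      ((∀ E ∈ Es, ∃ p ∈ E, ¬ J.obj p) → ∃ p ∈ E0, ¬ J.obj p) := by
    intro J
    simp [Interp.sat, sat_conjList, sat_conjAtoms]
  constructor
  · rintro h Io ⟨Id, hId, hmin⟩
    have hred := red_ofReduced Io (hD hId)
    refine (key (ofReduced Io Id)).1 (h _ ((isMinModel_PSeq P n _).2 ?_))
    rw [hred]
    exact ⟨hmin, (ih Io Id (hD hId) hmin.1).2 hId⟩
  · intro h J hJ
    obtain ⟨hmin, hN⟩ := (isMinModel_PSeq P n J).1 hJ
    exact (key J).2 (h J.obj ⟨red J, (ih J.obj _ (red_mem_DefSet J) hmin.1).1 hN, hmin⟩)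

theorem closed_iff_givenBy {At : Type} [Finite At] (O : Set (ObjVal At)) {Id : DefVal At}
    (hId : Id ∈ DefSet At) :
    (∀ Es E0, HoldsOn O Es E0 → (∀ E ∈ Es, Id E) → Id E0) ↔
      ∃ O' ⊆ O, O'.Nonempty ∧ givenBy Id O' := by
  classical
  constructor
  · intro h
    let O' : Set (ObjVal At) := {Io | Io ∈ O ∧ ∀ E, Id E → ∃ p ∈ E, ¬ Io p}
    -- For each valuation violating some `E` with `Id E`, choose such an `E`.
    have hex : ∀ Io : ObjVal At, ∃ E, (¬ ∀ E, Id E → ∃ p ∈ E, ¬ Io p) →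
        Id E ∧ ¬ ∃ p ∈ E, ¬ Io p := by
      intro Io
      by_cases hIo : ∀ E, Id E → ∃ p ∈ E, ¬ Io p
      · exact ⟨[], fun hn => absurd hIo hn⟩
      · obtain ⟨E, hE⟩ := not_forall.1 hIo
        exact ⟨E, fun _ => Classical.not_imp.1 hE⟩
    choose f hf using hex
    let Es := ((Set.toFinite (Set.range f)).toFinset.filter fun E => Id E).toList
    have hEs : ∀ E, E ∈ Es ↔ (∃ Io, f Io = E) ∧ Id E := by
      intro E
      simp [Es]
    have hgiven : givenBy Id O' := by
      intro E
      refine ⟨fun hE Io hIo => hIo.2 E hE, fun hE => h Es E ?_ fun E' hE' => ((hEs E').1 hE').2⟩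
      intro Io hIo hall
      refine hE Io ⟨hIo, ?_⟩
      by_contra hn
      obtain ⟨h1, h2⟩ := hf Io hn
      exact h2 (hall _ ((hEs _).2 ⟨⟨Io, rfl⟩, h1⟩))
    refine ⟨O', fun _ hIo => hIo.1, ?_, hgiven⟩
    -- An empty `O'` would give `Id []`, that is, `not(true)`.
    by_contra hne
    exact hId ((hgiven []).2 fun Io hIo => absurd ⟨Io, hIo⟩ hne)
  · rintro ⟨O', hsub, -, hgiven⟩ Es E0 hO hEs
    exact (hgiven E0).2 fun Io hIo =>
      hO Io (hsub hIo) fun E hE => (hgiven E).1 (hEs E hE) Io hIo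

theorem satNot_iff {At : Type} [Finite At] (P : Set (Clause At)) (n : ℕ) :
    ∀ (Io : ObjVal At), ∀ Id ∈ DefSet At, satProg Io Id P →
      (SatNot P n Id ↔ Id ∈ (LamOp P)^[n] (DefSet At)) := by
  induction n with
  | zero =>
    intro Io Id hId hmod
    have hred := red_ofReduced Io hId
    refine ⟨fun _ => hId, fun _ => ?_⟩
    have h := ((satTheory_PSeq P 0 (ofReduced Io Id)).1
      ((satTheory_toFml _ P).2 (by rw [hred]; exact hmod))).2
    rwa [hred] at h
  | succ n ih =>
    intro Io Id hId hmod
    have hred := red_ofReduced Io hId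
    have hent := minEntails_PSeq (iter_subset_DefSet P n) ih
    have hclosed : SatNot P (n + 1) Id ↔ ∀ Es E0,
        HoldsOn (PhiOp P ((LamOp P)^[n] (DefSet At))) Es E0 → (∀ E ∈ Es, Id E) → Id E0 := by
      refine ⟨fun h Es E0 hE => h Es E0 (notImpl_mem_PSeq_succ ((hent Es E0).2 hE)), fun h => ?_⟩
      have h' := ((satTheory_PSeq P (n + 1) (ofReduced Io Id)).1 (satTheory_PSeq_succ
        (by rw [hred]; exact hmod)
        (by rw [hred]; exact fun Es E0 hE => h Es E0 ((hent Es E0).1 hE)))).2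
      rwa [hred] at h'
    rw [hclosed, closed_iff_givenBy _ hId, Function.iterate_succ_apply']
    exact ⟨fun h => ⟨hId, h, Io, hmod⟩, fun h => h.2.1⟩

/-- Let `P` be a finite super logic program, let `P^n_not` be the formulas of the
form `not E1 ∧ … ∧ not Em → not E0` contained in `P^n`, and let
`D_n = Λ_P^[n](Def)`.  Then for every reduced interpretation `I = I_obj ∪ I_def`
with `I ⊨ P` and every `n`: `I_def ⊨ P^n_not` iff `I_def ∈ D_n`. -/
theorem defaultPart_sat_iff_mem_iter {At : Type} [Finite At]
    (P : Set (Clause At)) (hPfin : P.Finite)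
    (Io : ObjVal At) (Id : DefVal At) (hId : Id ∈ DefSet At)
    (hmod : satProg Io Id P) (n : ℕ) :
    (∀ (Es : List (List At)) (E0 : List At),
        Fml.impl (conjList (Es.map notConj)) (notConj E0) ∈ PSeq P n →
        ((∀ E ∈ Es, Id E) → Id E0)) ↔
      Id ∈ (LamOp P)^[n] (DefSet At) :=
  satNot_iff P n Io Id hId hmod
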